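/- arXiv:1602.06445 — 2 statements merged into one kernel-verified Lean document; each statement's English description precedes it below -/
import Mathlib

section
/- For every real number t and every integer n ≥ 1, the sequence A_n(t) satisfies the linear three-term recurrence (n+1)·A_{n+1}(t) − (2n+1)(2+t)·A_n(t) + n·t²·A_{n−1}(t) = 0. -/
open Finset

/-- `cₖ(t) = ∑_{m=1}^k (−1)^{m−1} t^m/m`. -/
noncomputable def clog (t : ℝ) (k : ℕ) : ℝ :=
  ∑ m ∈ Icc 1 k, (-1 : ℝ) ^ (m - 1) * t ^ m / m

/-- `Aₙ(t) = ∑_{k=0}^n C(n,k) C(n+k,k) t^{n−k} cₖ(t)`. -/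
noncomputable def Alog (t : ℝ) (n : ℕ) : ℝ :=
  ∑ k ∈ range (n + 1),
    (Nat.choose n k : ℝ) * (Nat.choose (n + k) k : ℝ) * t ^ (n - k) * clog t k

/-!
For an arbitrary sequence `c`, put `Sₙ(c) = ∑ₖ C(n,k) C(n+k,k) t^{n-k} cₖ`. The three-term
recurrence of the shifted Legendre polynomials, under the linear map `X^k ↦ cₖ`, shows that the
left-hand side of the recurrence for `Sₙ(c)` equals `2 (2n+1) Sₙ(Δc)`, where `Δc` is the forward
difference. For the partial sums of `log (1 + t)` one has `Δcₖ = (-1)^k t^{k+1}/(k+1)`, so `Sₙ(Δc)`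
is `t^{n+1}` times the integral over `[0, 1]` of the `n`-th shifted Legendre polynomial. That
integral vanishes for `n ≥ 1`; here this is seen by telescoping the sum of its coefficients divided
by `k + 1`.
-/

/-- The coefficient `C(n,k) C(n+k,k)` of `X^k` in the Legendre polynomial `Pₙ(1 + 2X)`; up to the
sign `(-1)^k` it is a coefficient of `Polynomial.shiftedLegendre n`. -/
def legendreCoeff (n k : ℕ) : ℕ := n.choose k * (n + k).choose k

theorem legendreCoeff_zero_right (n : ℕ) : legendreCoeff n 0 = 1 := by
  simp [legendreCoeff]

theorem legendreCoeff_eq_zero_of_lt {n k : ℕ} (h : n < k) : legendreCoeff n k = 0 := by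
  simp [legendreCoeff, Nat.choose_eq_zero_of_lt h]

theorem legendreCoeff_succ_right_mul_sq (n k : ℕ) :
    (legendreCoeff n (k + 1) * (k + 1) ^ 2 : ℤ) =
      legendreCoeff n k * ((n - k) * (n + k + 1)) := by
  rcases lt_or_ge n k with h | h
  · simp [legendreCoeff_eq_zero_of_lt h, legendreCoeff_eq_zero_of_lt (Nat.lt_succ_of_lt h)]
  have choose_lower : (n.choose (k + 1) * (k + 1) : ℤ) = n.choose k * (n - k) := by
    rw [← Nat.cast_sub h]
    exact_mod_cast Nat.choose_succ_right_eq n k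
  have choose_both : ((n + k + 1) * (n + k).choose k : ℤ) =
      (n + (k + 1)).choose (k + 1) * (k + 1) := by
    exact_mod_cast Nat.add_one_mul_choose_eq (n + k) k
  push_cast [legendreCoeff]
  linear_combination ((n + (k + 1)).choose (k + 1) * (k + 1) : ℤ) * choose_lower
    - (n.choose k * (n - k) : ℤ) * choose_both

theorem sub_mul_legendreCoeff_succ_left (n k : ℕ) :
    ((n + 1 - k) * legendreCoeff (n + 1) k : ℤ) = (n + 1 + k) * legendreCoeff n k := by
  rcases lt_or_ge (n + 1) k with h | h
  · simp [legendreCoeff_eq_zero_of_lt h, legendreCoeff_eq_zero_of_lt (Nat.lt_of_succ_lt h)]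
  have choose_upper : (n.choose k * (n + 1) : ℤ) = (n + 1).choose k * (n + 1 - k) := by
    have cast_sub : (n + 1 - k : ℤ) = (n + 1 - k : ℕ) := by push_cast [Nat.cast_sub h]; rfl
    rw [cast_sub]
    exact_mod_cast Nat.choose_mul_succ_eq n k
  have choose_upper_add : ((n + k).choose k * (n + 1 + k) : ℤ) =
      (n + 1 + k).choose k * (n + 1) := by
    have := Nat.choose_mul_succ_eq (n + k) k
    rw [Nat.add_right_comm n k 1, Nat.add_sub_cancel] at this
    exact_mod_cast this
  push_cast [legendreCoeff]
  linear_combination (-(n + 1 + k).choose k : ℤ) * choose_upper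
    - (n.choose k : ℤ) * choose_upper_add

theorem legendreCoeff_recurrence (n k : ℕ) :
    ((n + 2) * legendreCoeff (n + 2) (k + 1) - (2 * n + 3) * legendreCoeff (n + 1) (k + 1)
      + (n + 1) * legendreCoeff n (k + 1) : ℤ) = 2 * (2 * n + 3) * legendreCoeff (n + 1) k := by
  have hk : ((k : ℤ) + 1) ^ 2 ≠ 0 := by positivity
  apply mul_right_cancel₀ hk
  -- Every term becomes a multiple of `legendreCoeff (n + 1) k`.
  have lower₀ := legendreCoeff_succ_right_mul_sq n k
  have lower₁ := legendreCoeff_succ_right_mul_sq (n + 1) k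
  have lower₂ := legendreCoeff_succ_right_mul_sq (n + 2) k
  have upper₀ := sub_mul_legendreCoeff_succ_left n k
  have upper₁ := sub_mul_legendreCoeff_succ_left (n + 1) k
  push_cast at lower₁ lower₂ upper₁
  linear_combination ((n : ℤ) + 2) * lower₂ - (2 * n + 3) * lower₁ + (n + 1) * lower₀
    - ((n : ℤ) + 1) * (n - k) * upper₀ + (n + 2) * (n + k + 3) * upper₁

section AlternatingSum

variable {K : Type*} [Field K] [CharZero K]

theorem mul_sum_range_neg_one_pow_mul_legendreCoeff_div (n m : ℕ) :
    (n * (n + 1) : K) * ∑ k ∈ range m, (-1) ^ k * (legendreCoeff n k : K) / (k + 1) =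
      -((-1) ^ m * legendreCoeff n m * m) := by
  induction m with
  | zero => simp
  | succ m ih =>
    have coeff_succ : (legendreCoeff n (m + 1) * (m + 1) ^ 2 : K) =
        legendreCoeff n m * ((n - m) * (n + m + 1)) := by
      exact_mod_cast congrArg (Int.cast : ℤ → K) (legendreCoeff_succ_right_mul_sq n m)
    have hm : (m + 1 : K) ≠ 0 := Nat.cast_add_one_ne_zero m
    rw [sum_range_succ, mul_add, ih]
    push_cast
    field_simp
    linear_combination -(-1) ^ m * coeff_succ

theorem sum_range_neg_one_pow_mul_legendreCoeff_div_eq_zero {n : ℕ} (hn : n ≠ 0) :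
    ∑ k ∈ range (n + 1), (-1) ^ k * (legendreCoeff n k : K) / (k + 1) = 0 := by
  have telescoped := mul_sum_range_neg_one_pow_mul_legendreCoeff_div (K := K) n (n + 1)
  rw [legendreCoeff_eq_zero_of_lt n.lt_succ_self, Nat.cast_zero, mul_zero, zero_mul, neg_zero]
    at telescoped
  exact (mul_eq_zero.mp telescoped).resolve_left
    (mul_ne_zero (Nat.cast_ne_zero.mpr hn) (Nat.cast_add_one_ne_zero n))

end AlternatingSum

/-- The sum `∑ₖ C(n,k) C(n+k,k) t^{n-k} cₖ`: the image of the homogenized Legendre polynomial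
`t^n Pₙ(1 + 2X/t)` under the linear map `X^k ↦ cₖ`. -/
def legendreSum {R : Type*} [Semiring R] (t : R) (c : ℕ → R) (n : ℕ) : R :=
  ∑ k ∈ range (n + 1), legendreCoeff n k * t ^ (n - k) * c k

section Semiring

variable {R : Type*} [Semiring R]

theorem legendreSum_eq_sum_range (t : R) (c : ℕ → R) {n m : ℕ} (h : n < m) :
    legendreSum t c n = ∑ k ∈ range m, legendreCoeff n k * t ^ (n - k) * c k := by
  refine sum_subset (range_subset_range.mpr h) fun k _ hk => ?_
  have hnk : n < k := by simpa [Nat.lt_succ_iff] using hk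
  simp [legendreCoeff_eq_zero_of_lt hnk]

theorem legendreCoeff_mul_pow_add_sub (t : R) (n k d : ℕ) :
    legendreCoeff n k * t ^ (n + d - k) = legendreCoeff n k * t ^ (n - k) * t ^ d := by
  rcases lt_or_ge n k with h | h
  · simp [legendreCoeff_eq_zero_of_lt h]
  · rw [Nat.sub_add_comm h, pow_add, mul_assoc]

end Semiring

theorem legendreSum_sub {R : Type*} [Ring R] (t : R) (c d : ℕ → R) (n : ℕ) :
    legendreSum t (fun k => c k - d k) n = legendreSum t c n - legendreSum t d n := by
  simp only [legendreSum, mul_sub, sum_sub_distrib]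

section CommRing

variable {R : Type*} [CommRing R]

theorem legendreSum_recurrence_shift (t : R) (c : ℕ → R) (n : ℕ) :
    (n + 2) * legendreSum t c (n + 2) - (2 * n + 3) * t * legendreSum t c (n + 1)
      + (n + 1) * t ^ 2 * legendreSum t c n =
    2 * (2 * n + 3) * legendreSum t (fun k => c (k + 1)) (n + 1) := by
  have collect (k : ℕ) :
      (n + 2) * (legendreCoeff (n + 2) k * t ^ (n + 2 - k) * c k)
        - (2 * n + 3) * t * (legendreCoeff (n + 1) k * t ^ (n + 1 - k) * c k)
        + (n + 1) * t ^ 2 * (legendreCoeff n k * t ^ (n - k) * c k) =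
      ((n + 2) * legendreCoeff (n + 2) k - (2 * n + 3) * legendreCoeff (n + 1) k
        + (n + 1) * legendreCoeff n k) * t ^ (n + 2 - k) * c k := by
    linear_combination (2 * n + 3) * c k * legendreCoeff_mul_pow_add_sub t (n + 1) k 1
      - (n + 1) * c k * legendreCoeff_mul_pow_add_sub t n k 2
  have coeff_zero : ((n + 2) * legendreCoeff (n + 2) 0 - (2 * n + 3) * legendreCoeff (n + 1) 0
      + (n + 1) * legendreCoeff n 0 : R) = 0 := by
    simp only [legendreCoeff_zero_right]
    push_cast
    ring
  have coeff_rec (k : ℕ) :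
      ((n + 2) * legendreCoeff (n + 2) (k + 1) - (2 * n + 3) * legendreCoeff (n + 1) (k + 1)
        + (n + 1) * legendreCoeff n (k + 1) : R) = 2 * (2 * n + 3) * legendreCoeff (n + 1) k := by
    exact_mod_cast congrArg (Int.cast : ℤ → R) (legendreCoeff_recurrence n k)
  calc (n + 2) * legendreSum t c (n + 2) - (2 * n + 3) * t * legendreSum t c (n + 1)
        + (n + 1) * t ^ 2 * legendreSum t c n
      = ∑ k ∈ range (n + 3), ((n + 2) * legendreCoeff (n + 2) k
          - (2 * n + 3) * legendreCoeff (n + 1) k + (n + 1) * legendreCoeff n k)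
            * t ^ (n + 2 - k) * c k := by
        simp only [legendreSum_eq_sum_range t c (show n < n + 3 by omega),
          legendreSum_eq_sum_range t c (show n + 1 < n + 3 by omega),
          legendreSum_eq_sum_range t c (show n + 2 < n + 3 by omega),
          mul_sum, ← sum_sub_distrib, ← sum_add_distrib, collect]
    _ = ∑ k ∈ range (n + 2),
          2 * (2 * n + 3) * legendreCoeff (n + 1) k * t ^ (n + 1 - k) * c (k + 1) := by
        simp only [sum_range_succ' _ (n + 2), coeff_zero, coeff_rec, zero_mul, add_zero,
          Nat.reduceSubDiff]
    _ = 2 * (2 * n + 3) * legendreSum t (fun k => c (k + 1)) (n + 1) := by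
        simp only [legendreSum, mul_sum, mul_assoc]

theorem legendreSum_recurrence_fwdDiff (t : R) (c : ℕ → R) (n : ℕ) :
    (n + 2) * legendreSum t c (n + 2) - (2 * n + 3) * (2 + t) * legendreSum t c (n + 1)
      + (n + 1) * t ^ 2 * legendreSum t c n =
    2 * (2 * n + 3) * legendreSum t (fun k => c (k + 1) - c k) (n + 1) := by
  rw [legendreSum_sub]
  linear_combination legendreSum_recurrence_shift t c n

end CommRing

theorem legendreSum_neg_one_pow_mul_pow_succ_div {K : Type*} [Field K] [CharZero K] (t : K)
    {n : ℕ} (hn : n ≠ 0) :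
    legendreSum t (fun k => (-1) ^ k * t ^ (k + 1) / (k + 1)) n = 0 := by
  calc legendreSum t (fun k => (-1) ^ k * t ^ (k + 1) / (k + 1)) n
      = ∑ k ∈ range (n + 1), t ^ (n + 1) * ((-1) ^ k * (legendreCoeff n k : K) / (k + 1)) := by
        refine sum_congr rfl fun k hk => ?_
        have hkn : n - k + (k + 1) = n + 1 := by have := mem_range.mp hk; omega
        rw [← hkn, pow_add]
        ring
    _ = 0 := by
        rw [← mul_sum, sum_range_neg_one_pow_mul_legendreCoeff_div_eq_zero hn, mul_zero]

theorem Alog_recurrence_general {K : Type*} [Field K] [CharZero K] (t : K) (c : ℕ → K)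
    (hc : ∀ k : ℕ, c (k + 1) - c k = (-1) ^ k * t ^ (k + 1) / (k + 1)) (n : ℕ) (hn : 1 ≤ n) :
    ((n : K) + 1) * legendreSum t c (n + 1) - (2 * (n : K) + 1) * (2 + t) * legendreSum t c n
      + (n : K) * t ^ 2 * legendreSum t c (n - 1) = 0 := by
  obtain ⟨m, rfl⟩ := Nat.exists_eq_add_of_le' hn
  have recurrence := legendreSum_recurrence_fwdDiff t c m
  simp only [hc, legendreSum_neg_one_pow_mul_pow_succ_div t m.succ_ne_zero] at recurrence
  rw [Nat.add_sub_cancel]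
  push_cast
  linear_combination recurrence

theorem clog_succ_sub_clog (t : ℝ) (k : ℕ) :
    clog t (k + 1) - clog t k = (-1) ^ k * t ^ (k + 1) / (k + 1) := by
  simp [clog, sum_Icc_succ_top]

theorem Alog_eq_legendreSum (t : ℝ) (n : ℕ) : Alog t n = legendreSum t (clog t) n := by
  simp only [Alog, legendreSum, legendreCoeff, Nat.cast_mul]

/-- **Three-term recurrence for `Aₙ(t)`.**
For every real `t` and every `n ≥ 1`,
`(n+1) A_{n+1}(t) − (2n+1)(2+t) Aₙ(t) + n t² A_{n−1}(t) = 0`. -/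
theorem Alog_recurrence (t : ℝ) (n : ℕ) (hn : 1 ≤ n) :
    ((n : ℝ) + 1) * Alog t (n + 1) - (2 * (n : ℝ) + 1) * (2 + t) * Alog t n
      + (n : ℝ) * t ^ 2 * Alog t (n - 1) = 0 := by
  simp only [Alog_eq_legendreSum]
  exact Alog_recurrence_general t (clog t) (clog_succ_sub_clog t) n hn
end

section
/- Let −1 < t ≤ 1. Then ∑_{n=0}^∞ (B_n(t)·log(1+t) − A_n(t)) = (2/√(3+2t−t²))·( arctan((1+t)/√(3+2t−t²)) − arctan((1−t)/√(3+2t−t²)) ). In particular, for t = 1 this error sum equals π/4, i.e. ∑_{n=0}^∞ (B_n(1)·log 2 − A_n(1)) = π/4. -/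
open Finset Real

/-- `Bₙ(t) = ∑_{k=0}^n C(n,k) C(n+k,k) t^{n−k}`. -/
noncomputable def Blog (t : ℝ) (n : ℕ) : ℝ :=
  ∑ k ∈ range (n + 1), (Nat.choose n k : ℝ) * (Nat.choose (n + k) k : ℝ) * t ^ (n - k)

/-!
The error `Bₙ(t) log(1+t) − Aₙ(t)` is a combination of the Taylor remainders
`log(1+t) − cₖ(t) = t ∫₀¹ (−ty)ᵏ / (1+ty) dy`, and its coefficients assemble to the shifted Legendre
polynomial `Pₙ`: the error is `tⁿ⁺¹ ∫₀¹ Pₙ(y) / (1+ty) dy`. By Rodrigues' formula, `n` integrations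
by parts turn this into `∫₀¹ t/(1+ty) · qⁿ dy` with `q = t² y(1−y) / (1+ty)`. By AM-GM,
`0 ≤ q ≤ (√(1+t) − 1)²`, which is below `1` exactly when `−1 < t < 3`, so the geometric series may
be summed under the integral sign; completing the square in the denominator `1 + ty − t² y(1−y)`
leaves an arctangent integral.
-/

section ShiftedLegendre

open Polynomial

theorem eval_iterate_derivative_eq_zero_of_pow_dvd {R : Type*} [CommRing R] {p q : R[X]} {a : R}
    {n i : ℕ} (hdvd : q ^ n ∣ p) (hq : q.eval a = 0) (hi : i < n) :
    (derivative^[i] p).eval a = 0 := by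
  obtain ⟨r, hr⟩ := pow_sub_dvd_iterate_derivative_of_pow_dvd i hdvd
  rw [hr, eval_mul, eval_pow, hq, zero_pow (Nat.sub_ne_zero_of_lt hi), zero_mul]

theorem sum_choose_mul_choose_mul_pow_eq_aeval_shiftedLegendre {R : Type*} [CommRing R] (t x : R)
    (n : ℕ) :
    ∑ k ∈ range (n + 1), (n.choose k : R) * ((n + k).choose k : R) * t ^ (n - k) * (-(t * x)) ^ k
      = t ^ n * aeval x (shiftedLegendre n) := by
  simp only [shiftedLegendre, map_sum, map_mul, map_pow, aeval_C, aeval_X, mul_sum]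
  refine sum_congr rfl fun k hk => ?_
  rw [← pow_sub_mul_pow t (mem_range_succ_iff.mp hk), Nat.choose_symm_add]
  simp only [map_neg, map_one, map_natCast]
  ring

end ShiftedLegendre

section IteratedIntegrationByParts

open Polynomial intervalIntegral

theorem integral_iterated_deriv_mul {A : Type*} [NormedRing A] [NormedAlgebra ℝ A]
    [CompleteSpace A] {a b : ℝ} {f : ℕ → ℝ → A}
    (hf : ∀ i, ∀ x ∈ Set.uIcc a b, HasDerivAt (f i) (f (i + 1) x) x) (n : ℕ)
    (hfa : ∀ i < n, f i a = 0) (hfb : ∀ i < n, f i b = 0) {g : ℕ → ℝ → A}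
    (hg : ∀ i, ∀ x ∈ Set.uIcc a b, HasDerivAt (g i) (g (i + 1) x) x) :
    ∫ x in a..b, f n x * g 0 x = (-1) ^ n * ∫ x in a..b, f 0 x * g n x := by
  induction n generalizing g with
  | zero => simp
  | succ n ih =>
    have intervalIntegrable_of_deriv {h : ℕ → ℝ → A}
        (hh : ∀ i, ∀ x ∈ Set.uIcc a b, HasDerivAt (h i) (h (i + 1) x) x) (i : ℕ) :
        IntervalIntegrable (h i) MeasureTheory.volume a b :=
      ContinuousOn.intervalIntegrable fun x hx => (hh i x hx).continuousAt.continuousWithinAt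
    have by_parts := integral_mul_deriv_eq_deriv_mul (hf n) (hg 0)
      (intervalIntegrable_of_deriv hf (n + 1)) (intervalIntegrable_of_deriv hg 1)
    rw [hfa n n.lt_succ_self, hfb n n.lt_succ_self, zero_mul, zero_mul, sub_zero, zero_sub,
      ih (fun i hi => hfa i (hi.trans n.lt_succ_self)) (fun i hi => hfb i (hi.trans n.lt_succ_self))
        (g := fun i => g (i + 1)) fun i => hg (i + 1)] at by_parts
    rw [← neg_eq_iff_eq_neg.mpr by_parts, pow_succ']
    simp only [neg_mul, one_mul]

theorem factorial_mul_integral_shiftedLegendre_mul (n : ℕ) {g : ℕ → ℝ → ℝ}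
    (hg : ∀ i, ∀ x ∈ Set.uIcc (0 : ℝ) 1, HasDerivAt (g i) (g (i + 1) x) x) :
    (n.factorial : ℝ) * ∫ x in (0 : ℝ)..1, aeval x (shiftedLegendre n) * g 0 x
      = (-1) ^ n * ∫ x in (0 : ℝ)..1, x ^ n * (1 - x) ^ n * g n x := by
  set p : ℝ[X] := X ^ n * (1 - X) ^ n with hp
  have rodrigues (x : ℝ) :
      (n.factorial : ℝ) * aeval x (shiftedLegendre n) = (derivative^[n] p).eval x := by
    have hmap : (X ^ n * (1 - X) ^ n : ℤ[X]).map (Int.castRingHom ℝ) = p := by simp [hp]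
    rw [← hmap, iterate_derivative_map, ← algebraMap_int_eq, eval_map_algebraMap]
    simpa using congrArg (aeval x) (factorial_mul_shiftedLegendre_eq n)
  have by_parts := integral_iterated_deriv_mul (a := 0) (b := 1)
    (f := fun i x => (derivative^[i] p).eval x)
    (fun i x _ => by
      simpa only [Function.iterate_succ_apply'] using (derivative^[i] p).hasDerivAt x) n
    (fun i => eval_iterate_derivative_eq_zero_of_pow_dvd (Dvd.intro _ rfl) eval_X)
    (fun i => eval_iterate_derivative_eq_zero_of_pow_dvd (Dvd.intro_left _ rfl) (by simp)) hg
  rw [← integral_const_mul]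
  simpa only [← mul_assoc, rodrigues, Function.iterate_zero_apply, hp, eval_mul, eval_pow, eval_sub,
    eval_X, eval_one] using by_parts

theorem hasDerivAt_factorial_mul_pow_div_pow {𝕜 : Type*} [NontriviallyNormedField 𝕜] {c d x : 𝕜}
    (h : d + c * x ≠ 0) (i : ℕ) :
    HasDerivAt (fun x => (i.factorial : 𝕜) * (-c) ^ i / (d + c * x) ^ (i + 1))
      (((i + 1).factorial : 𝕜) * (-c) ^ (i + 1) / (d + c * x) ^ (i + 1 + 1)) x := by
  have hpow : HasDerivAt (fun x => (d + c * x) ^ (i + 1)) ((i + 1) * (d + c * x) ^ i * c) x := by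
    simpa using (((hasDerivAt_id x).const_mul c).const_add d).fun_pow (i + 1)
  have hconst := hasDerivAt_const x ((i.factorial : 𝕜) * (-c) ^ i)
  refine (hconst.fun_div hpow (pow_ne_zero _ h)).congr_deriv ?_
  rw [Nat.factorial_succ]
  push_cast
  field_simp
  ring

end IteratedIntegrationByParts

section GeometricSeries

open MeasureTheory

theorem hasSum_integral_mul_pow {α 𝕜 : Type*} [MeasurableSpace α] {μ : Measure α} [RCLike 𝕜]
    {f q : α → 𝕜} {r : ℝ} (hf : Integrable f μ) (hq : AEStronglyMeasurable q μ) (hr : r < 1)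
    (hqr : ∀ᵐ x ∂μ, ‖q x‖ ≤ r) :
    HasSum (fun n : ℕ => ∫ x, f x * q x ^ n ∂μ) (∫ x, f x * (1 - q x)⁻¹ ∂μ) := by
  refine hasSum_integral_of_dominated_convergence (fun n x => ‖f x‖ * r ^ n)
    (fun n => hf.aestronglyMeasurable.mul (hq.pow n)) (fun n => ?_) ?_ ?_ ?_
  · filter_upwards [hqr] with x hx
    rw [norm_mul, norm_pow]
    gcongr
  · filter_upwards [hqr] with x hx
    exact (summable_geometric_of_lt_one ((norm_nonneg _).trans hx) hr).mul_left _
  · simp only [tsum_mul_left]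
    exact hf.norm.mul_const _
  · filter_upwards [hqr] with x hx
    exact (hasSum_geometric_of_norm_lt_one (hx.trans_lt hr)).mul_left _

end GeometricSeries

section LogRemainder

open intervalIntegral

variable {t : ℝ}

theorem one_add_mul_pos {y : ℝ} (ht : -1 < t) (hy : y ∈ Set.uIcc (0 : ℝ) 1) : 0 < 1 + t * y := by
  rw [Set.uIcc_of_le zero_le_one] at hy
  rcases le_total 0 t with h | h
  · exact add_pos_of_pos_of_nonneg one_pos (mul_nonneg h hy.1)
  · calc 0 < 1 + t := by linarith
      _ ≤ 1 + t * y := by gcongr; exact le_mul_of_le_one_right h hy.2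

theorem intervalIntegrable_div_one_add_mul (ht : -1 < t) {f : ℝ → ℝ} (hf : Continuous f) :
    IntervalIntegrable (fun y => f y / (1 + t * y)) MeasureTheory.volume 0 1 :=
  (hf.continuousOn.div (by fun_prop) fun _ hy => (one_add_mul_pos ht hy).ne').intervalIntegrable

theorem clog_succ (t : ℝ) (k : ℕ) :
    clog t (k + 1) = clog t k + (-1) ^ k * t ^ (k + 1) / (k + 1) := by
  simp [clog, sum_Icc_succ_top]

theorem integral_pow_div_one_add_mul_eq_add (ht : -1 < t) (k : ℕ) :
    (∫ y in (0 : ℝ)..1, (-(t * y)) ^ k / (1 + t * y))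
      = (-t) ^ k / (k + 1) + ∫ y in (0 : ℝ)..1, (-(t * y)) ^ (k + 1) / (1 + t * y) := by
  have hmonomial : ∫ y in (0 : ℝ)..1, (-(t * y)) ^ k = (-t) ^ k / (k + 1) := by
    simp only [← neg_mul, mul_pow, integral_const_mul, integral_pow]
    simp [div_eq_mul_inv]
  rw [← hmonomial, ← integral_add ((by fun_prop : Continuous _).intervalIntegrable _ _)
    (intervalIntegrable_div_one_add_mul ht (by fun_prop))]
  refine integral_congr fun y hy => ?_
  have hpos := one_add_mul_pos ht hy
  field_simp
  ring

theorem log_one_add_sub_clog (ht : -1 < t) (k : ℕ) :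
    log (1 + t) - clog t k = t * ∫ y in (0 : ℝ)..1, (-(t * y)) ^ k / (1 + t * y) := by
  induction k with
  | zero =>
    have hclog : clog t 0 = 0 := sum_empty
    have hintegral := integral_inv_of_pos (a := 1 + t * 0) (b := 1 + t * 1) (by simp) (by linarith)
    rw [← mul_integral_comp_add_mul] at hintegral
    simpa [hclog] using hintegral.symm
  | succ k ih =>
    rw [integral_pow_div_one_add_mul_eq_add ht] at ih
    rw [clog_succ, ← sub_sub, ih, neg_pow]
    ring

end LogRemainder

section LegendreIntegral

open Polynomial intervalIntegral

variable {t : ℝ}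

theorem integral_shiftedLegendre_div_one_add_mul (ht : -1 < t) (n : ℕ) :
    ∫ y in (0 : ℝ)..1, aeval y (shiftedLegendre n) / (1 + t * y)
      = t ^ n * ∫ y in (0 : ℝ)..1, y ^ n * (1 - y) ^ n / (1 + t * y) ^ (n + 1) := by
  have hfactorial : (n.factorial : ℝ) ≠ 0 := Nat.cast_ne_zero.mpr n.factorial_ne_zero
  have by_parts := factorial_mul_integral_shiftedLegendre_mul n fun i y hy =>
    hasDerivAt_factorial_mul_pow_div_pow (one_add_mul_pos ht hy).ne' i
  refine mul_left_cancel₀ hfactorial ?_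
  calc (n.factorial : ℝ) * ∫ y in (0 : ℝ)..1, aeval y (shiftedLegendre n) / (1 + t * y)
      = (-1) ^ n * ∫ y in (0 : ℝ)..1,
          y ^ n * (1 - y) ^ n * (n.factorial * (-t) ^ n / (1 + t * y) ^ (n + 1)) := by
        simpa [div_eq_mul_inv] using by_parts
    _ = (-1) ^ n * ((n.factorial * (-t) ^ n)
          * ∫ y in (0 : ℝ)..1, y ^ n * (1 - y) ^ n / (1 + t * y) ^ (n + 1)) := by
        rw [← integral_const_mul (n.factorial * (-t) ^ n)]
        congr 2 with y
        ring
    _ = n.factorial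
          * (t ^ n * ∫ y in (0 : ℝ)..1, y ^ n * (1 - y) ^ n / (1 + t * y) ^ (n + 1)) := by
        have hsign : (-1 : ℝ) ^ n * (-t) ^ n = t ^ n := by rw [← mul_pow, neg_one_mul, neg_neg]
        rw [← hsign]
        ring

theorem Blog_mul_log_sub_Alog_eq_integral_shiftedLegendre (ht : -1 < t) (n : ℕ) :
    Blog t n * log (1 + t) - Alog t n
      = t ^ (n + 1) * ∫ y in (0 : ℝ)..1, aeval y (shiftedLegendre n) / (1 + t * y) := by
  calc Blog t n * log (1 + t) - Alog t n
      = ∑ k ∈ range (n + 1), (n.choose k : ℝ) * ((n + k).choose k : ℝ) * t ^ (n - k)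
          * (log (1 + t) - clog t k) := by
        simp only [Blog, Alog, sum_mul, mul_sub, sum_sub_distrib]
    _ = t * ∫ y in (0 : ℝ)..1, (∑ k ∈ range (n + 1),
          (n.choose k : ℝ) * ((n + k).choose k : ℝ) * t ^ (n - k) * (-(t * y)) ^ k)
            / (1 + t * y) := by
        simp only [sum_div, mul_div_assoc]
        rw [integral_finsetSum fun k _ =>
          (intervalIntegrable_div_one_add_mul ht (by fun_prop)).const_mul _, mul_sum]
        refine sum_congr rfl fun k _ => ?_
        rw [log_one_add_sub_clog ht, integral_const_mul, mul_left_comm]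
    _ = t ^ (n + 1) * ∫ y in (0 : ℝ)..1, aeval y (shiftedLegendre n) / (1 + t * y) := by
        simp only [sum_choose_mul_choose_mul_pow_eq_aeval_shiftedLegendre, mul_div_assoc,
          integral_const_mul]
        ring

end LegendreIntegral

section ErrorSum

open intervalIntegral

variable {t : ℝ}

/-- The common ratio of the geometric series obtained by moving the error sum under the integral
sign: the `n`-th error is `∫₀¹ t / (1 + t y) * (logErrorRatio t y) ^ n dy`. -/
noncomputable def logErrorRatio (t y : ℝ) : ℝ :=
  t ^ 2 * y * (1 - y) / (1 + t * y)

theorem Blog_mul_log_sub_Alog_eq_integral_logErrorRatio (ht : -1 < t) (n : ℕ) :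
    Blog t n * log (1 + t) - Alog t n
      = ∫ y in (0 : ℝ)..1, t / (1 + t * y) * logErrorRatio t y ^ n := by
  rw [Blog_mul_log_sub_Alog_eq_integral_shiftedLegendre ht,
    integral_shiftedLegendre_div_one_add_mul ht, ← mul_assoc, ← integral_const_mul]
  congr 1 with y
  rw [logErrorRatio, div_pow, div_mul_div_comm, ← pow_succ', mul_pow, mul_pow]
  ring

theorem abs_logErrorRatio_le {y : ℝ} (ht : -1 < t) (hy : y ∈ Set.uIcc (0 : ℝ) 1) :
    |logErrorRatio t y| ≤ (√(1 + t) - 1) ^ 2 := by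
  have hpos := one_add_mul_pos ht hy
  have hsqrt : √(1 + t) ^ 2 = 1 + t := sq_sqrt (by linarith)
  rw [Set.uIcc_of_le zero_le_one] at hy
  have hy' : 0 ≤ 1 - y := sub_nonneg.mpr hy.2
  rw [logErrorRatio, abs_of_nonneg (div_nonneg (mul_nonneg (mul_nonneg (sq_nonneg t) hy.1) hy')
    hpos.le), div_le_iff₀ hpos, ← sub_nonneg]
  calc (0 : ℝ) ≤ (1 + t * y - √(1 + t)) ^ 2 := sq_nonneg _
    _ = (√(1 + t) - 1) ^ 2 * (1 + t * y) - t ^ 2 * y * (1 - y) := by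
      linear_combination (-(t * y)) * hsqrt

theorem sqrt_one_add_sub_one_sq_lt_one (ht : -1 < t) (ht' : t < 3) : (√(1 + t) - 1) ^ 2 < 1 := by
  have hpos : 0 < √(1 + t) := sqrt_pos.mpr (by linarith)
  have hlt : √(1 + t) < 2 := (sqrt_lt' two_pos).mpr (by linarith)
  rw [sq_lt_one_iff_abs_lt_one, abs_lt]
  constructor <;> linarith

theorem hasSum_Blog_mul_log_sub_Alog (ht : -1 < t) (ht' : t < 3) :
    HasSum (fun n => Blog t n * log (1 + t) - Alog t n)
      (∫ y in (0 : ℝ)..1, t / (1 + t * y) * (1 - logErrorRatio t y)⁻¹) := by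
  simp only [Blog_mul_log_sub_Alog_eq_integral_logErrorRatio ht, integral_of_le zero_le_one]
  refine hasSum_integral_mul_pow
    (intervalIntegrable_div_one_add_mul ht continuous_const).1 ?_
    (sqrt_one_add_sub_one_sq_lt_one ht ht') ?_
  · exact Measurable.aestronglyMeasurable (by unfold logErrorRatio; fun_prop)
  · refine MeasureTheory.ae_restrict_of_forall_mem measurableSet_Ioc fun y hy => ?_
    exact abs_logErrorRatio_le ht (Set.Icc_subset_uIcc (Set.Ioc_subset_Icc_self hy))

theorem div_one_add_mul_mul_inv_one_sub_logErrorRatio {y : ℝ} (h : 1 + t * y ≠ 0) :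
    t / (1 + t * y) * (1 - logErrorRatio t y)⁻¹
      = 4 * t * ((3 + 2 * t - t ^ 2) + (2 * t * y + (1 - t)) ^ 2)⁻¹ := by
  have hsquare : (3 + 2 * t - t ^ 2) + (2 * t * y + (1 - t)) ^ 2
      = 4 * ((1 + t * y) * (1 - logErrorRatio t y)) := by
    rw [logErrorRatio, mul_sub, mul_div_cancel₀ _ h]
    ring
  rw [hsquare, mul_inv, mul_inv]
  ring

theorem integral_div_one_add_mul_mul_inv_one_sub_logErrorRatio (ht : -1 < t) (ht' : t < 3) :
    ∫ y in (0 : ℝ)..1, t / (1 + t * y) * (1 - logErrorRatio t y)⁻¹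
      = 2 / √(3 + 2 * t - t ^ 2) *
          (arctan ((1 + t) / √(3 + 2 * t - t ^ 2)) - arctan ((1 - t) / √(3 + 2 * t - t ^ 2))) := by
  have hD : 0 < 3 + 2 * t - t ^ 2 := by nlinarith
  set s := √(3 + 2 * t - t ^ 2)
  have hs_sq : s ^ 2 = 3 + 2 * t - t ^ 2 := sq_sqrt hD.le
  have hs_ne : s ≠ 0 := (sqrt_pos.mpr hD).ne'
  calc ∫ y in (0 : ℝ)..1, t / (1 + t * y) * (1 - logErrorRatio t y)⁻¹
      = ∫ y in (0 : ℝ)..1, 4 * t * (s ^ 2 + (2 * t * y + (1 - t)) ^ 2)⁻¹ :=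
        integral_congr fun y hy => by
          simpa only [hs_sq] using
            div_one_add_mul_mul_inv_one_sub_logErrorRatio (one_add_mul_pos ht hy).ne'
    _ = 2 * (2 * t * ∫ y in (0 : ℝ)..1, (s ^ 2 + (2 * t * y + (1 - t)) ^ 2)⁻¹) := by
        rw [integral_const_mul]
        ring
    _ = 2 * ∫ x in (1 - t)..(1 + t), (s ^ 2 + x ^ 2)⁻¹ := by
        rw [mul_integral_comp_mul_add (f := fun x => (s ^ 2 + x ^ 2)⁻¹)]
        ring_nf
    _ = 2 / s * (arctan ((1 + t) / s) - arctan ((1 - t) / s)) := by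
        rw [integral_inv_sq_add_sq hs_ne]
        ring

theorem error_sum_log_general (ht : -1 < t) (ht' : t < 3) :
    HasSum (fun n => Blog t n * log (1 + t) - Alog t n)
      (2 / √(3 + 2 * t - t ^ 2) *
        (arctan ((1 + t) / √(3 + 2 * t - t ^ 2)) - arctan ((1 - t) / √(3 + 2 * t - t ^ 2)))) :=
  integral_div_one_add_mul_mul_inv_one_sub_logErrorRatio ht ht' ▸
    hasSum_Blog_mul_log_sub_Alog ht ht'

theorem hasSum_Blog_one_mul_log_two_sub_Alog_one :
    HasSum (fun n => Blog 1 n * log 2 - Alog 1 n) (π / 4) := by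
  have hsqrt : √(3 + 2 * 1 - 1 ^ 2 : ℝ) = 2 := by
    rw [sqrt_eq_iff_mul_self_eq_of_pos two_pos]
    norm_num
  have harctan : (2 : ℝ) / 2 * (arctan ((1 + 1) / 2) - arctan ((1 - 1) / 2)) = π / 4 := by norm_num
  have hsum := error_sum_log_general (t := 1) (by norm_num) (by norm_num)
  rwa [hsqrt, harctan, one_add_one_eq_two] at hsum

end ErrorSum

/-- **Closed form of the error sum for `log(1+t)`.**
For `−1 < t ≤ 1`,
`∑ₙ (Bₙ(t) log(1+t) − Aₙ(t))
  = (2/√(3+2t−t²)) (arctan((1+t)/√(3+2t−t²)) − arctan((1−t)/√(3+2t−t²)))`;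
in particular for `t = 1` the error sum equals `π/4`. -/
theorem error_sum_log :
    (∀ t : ℝ, -1 < t → t ≤ 1 →
      ∑' n : ℕ, (Blog t n * Real.log (1 + t) - Alog t n)
        = 2 / Real.sqrt (3 + 2 * t - t ^ 2) *
            (Real.arctan ((1 + t) / Real.sqrt (3 + 2 * t - t ^ 2))
              - Real.arctan ((1 - t) / Real.sqrt (3 + 2 * t - t ^ 2)))) ∧
    ∑' n : ℕ, (Blog 1 n * Real.log 2 - Alog 1 n) = π / 4 :=
  ⟨fun _ ht ht' => (error_sum_log_general ht (by linarith)).tsum_eq,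
    hasSum_Blog_one_mul_log_two_sub_Alog_one.tsum_eq⟩
end
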